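/- Let Γ = (V_Γ, T_Γ, s, r) and Δ = (V_Δ, T_Δ, s, r) be two networks. Then Γ and Δ are isomorphic as networks if and only if the semigroups Q_Γ and Q_Δ are isomorphic. -/

import Mathlib

/-!
A network isomorphism maps generators to generators and defining relations to defining relations,
so it induces an isomorphism of the semigroups (`qEquiv`). For the converse the network has to be
read off from the multiplication of `Q_Γ`.

Normal forms: the presentation is a complete rewriting system on words, whose left-hand sides
all have length two, after adding the rule `t⁻¹u⁻¹ = 0` for `s(t) ≠ r(u)`.
Instead of checking confluence, generators act on irreducible words by multiplying and reducing
(`act`); the defining relations hold in this action (`QCon_le`), so applying `x ∈ Q_Γ` to the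
empty word gives a normal form `nf x`, and `back_nf` recovers `x` from it.

Recovering the network:
* `T⁰` consists of the elements `e ≠ 0` such that `ef = e` only for `f = e` (`isVtx_iff`).
  Indeed `Af` reduces to `A` only if `f = A`, while any `x` ending in the letter `h` satisfies
  `x r(h) = x`.
* For `A, B ∈ T⁰`, `AB ≠ 0` iff `A` and `B` meet (`ver_mul_ver`). Hence singletons are the `A ∈ T⁰`
  whose neighbours for this relation meet pairwise (`single_iff`), and `v ∈ A` iff `{v}A ≠ 0`.
* Linear paths are the `x` with `yx ∈ T⁰` for some `y` (`isLin_iff`): the key point is that if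
  reducing `gw` gives a linear path then `w` is already one (`LinW.of_act`). The elements of `T`
  are the linear paths outside `T⁰` with no proper factorization into linear paths
  (`isEdge_iff`); here the degree, which counts `t` as `1` and `t⁻¹` as `-1` and is additive on
  products other than `0`, excludes factorizations of `t`.
* `s(t)` and `r(t)` are the unique `A, B ∈ T⁰` with `At = t` and `tB = t`
  (`ver_mul_pos`, `pos_mul_ver`).
-/

namespace NetworkSemigroup

/-- A network: vertices `V`, relations `T`, with source and range maps assigning to each
relation disjoint nonempty subsets of `V`. -/
structure Network (V T : Type) where
  s : T → Set V
  r : T → Set V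
  s_nonempty : ∀ t, (s t).Nonempty
  r_nonempty : ∀ t, (r t).Nonempty
  disj : ∀ t, s t ∩ r t = ∅

variable {V T : Type}

/-- Membership in `T⁰`: sources and ranges of relations, together with singletons of vertices. -/
def Network.InT0 (N : Network V T) (A : Set V) : Prop :=
  (∃ t, A = N.s t) ∨ (∃ t, A = N.r t) ∨ (∃ v : V, A = {v})

/-- The set `T⁰` as a type. -/
def Network.T0 (N : Network V T) : Type := { A : Set V // N.InT0 A }

/-- The generating set `X = T ∪ T⁰ ∪ T⁻¹ ∪ {0}` of the presentation of `Q_Γ`. -/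
inductive Gen (N : Network V T) : Type
  | pos : T → Gen N
  | neg : T → Gen N
  | ver : N.T0 → Gen N
  | zero : Gen N

namespace Gen

variable {N : Network V T}

/-- The source (as a set of vertices) of a generator. -/
def srcSet : Gen N → Set V
  | .pos t => N.s t
  | .neg t => N.r t
  | .ver A => A.1
  | .zero => ∅

/-- The range (as a set of vertices) of a generator. -/
def rngSet : Gen N → Set V
  | .pos t => N.r t
  | .neg t => N.s t
  | .ver A => A.1
  | .zero => ∅

/-- The source of a generator, as the corresponding element of `T⁰`. -/
def srcGen : Gen N → Gen N
  | .pos t => .ver ⟨N.s t, Or.inl ⟨t, rfl⟩⟩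
  | .neg t => .ver ⟨N.r t, Or.inr (Or.inl ⟨t, rfl⟩)⟩
  | .ver A => .ver A
  | .zero => .zero

/-- The range of a generator, as the corresponding element of `T⁰`. -/
def rngGen : Gen N → Gen N
  | .pos t => .ver ⟨N.r t, Or.inr (Or.inl ⟨t, rfl⟩)⟩
  | .neg t => .ver ⟨N.s t, Or.inl ⟨t, rfl⟩⟩
  | .ver A => .ver A
  | .zero => .zero

end Gen

open FreeSemigroup

/-- The defining relations (NR1)–(NR6) of the presentation of `Q_Γ`, as a binary relation on
the free semigroup over the generators. -/
inductive NRel (N : Network V T) : FreeSemigroup (Gen N) → FreeSemigroup (Gen N) → Prop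
  | nr1l (g : Gen N) (hg : g ≠ .zero) : NRel N (of g.srcGen * of g) (of g)
  | nr1r (g : Gen N) (hg : g ≠ .zero) : NRel N (of g * of g.rngGen) (of g)
  | nr2 (g₁ g₂ : Gen N) (h₁ : g₁ ≠ .zero) (h₂ : g₂ ≠ .zero)
      (h : g₁.rngSet ∩ g₂.srcSet = ∅) : NRel N (of g₁ * of g₂) (of .zero)
  | nr3 (t₁ t₂ : T) (h : t₁ ≠ t₂) :
      NRel N (of (.neg t₁) * of (.pos t₂)) (of .zero)
  | nr4 (t : T) :
      NRel N (of (.neg t) * of (.pos t)) (of (.ver ⟨N.r t, Or.inr (Or.inl ⟨t, rfl⟩)⟩))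
  | nr5 (t : T) (A : N.T0) (h : A.1 ≠ N.s t) :
      NRel N (of (.neg t) * of (.ver A)) (of .zero)
  | nr6l (x : Gen N) : NRel N (of .zero * of x) (of .zero)
  | nr6r (x : Gen N) : NRel N (of x * of .zero) (of .zero)

/-- The congruence on the free semigroup generated by the defining relations. -/
def QCon (N : Network V T) : Con (FreeSemigroup (Gen N)) := conGen (NRel N)

/-- The semigroup `Q_Γ` given by the presentation `⟨X : R⟩`. -/
abbrev QGamma (N : Network V T) : Type := (QCon N).Quotient

/-- The congruence class of a word. -/
def Qofw {N : Network V T} (w : FreeSemigroup (Gen N)) : QGamma N := (w : (QCon N).Quotient)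

/-- The zero element `[0]` of `Q_Γ`. -/
def Qzero (N : Network V T) : QGamma N := Qofw (of .zero)

/-- Path symbols: elements of `T ∪ T⁰`. -/
def PSym (N : Network V T) : Type := T ⊕ N.T0

namespace PSym

variable {N : Network V T}

/-- The source of a path symbol. -/
def src : PSym N → Set V
  | Sum.inl t => N.s t
  | Sum.inr A => A.1

/-- The range of a path symbol. -/
def rng : PSym N → Set V
  | Sum.inl t => N.r t
  | Sum.inr A => A.1

/-- The generator corresponding to a path symbol. -/
def toGen : PSym N → Gen N
  | Sum.inl t => Gen.pos t
  | Sum.inr A => Gen.ver A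

/-- The generator corresponding to the inverse of a path symbol (`t ↦ t⁻¹`, `A ↦ A`). -/
def toInvGen : PSym N → Gen N
  | Sum.inl t => Gen.neg t
  | Sum.inr A => Gen.ver A

/-- The path symbol is the element of `T⁰` given by the set `B`. -/
def IsVerOf : PSym N → Set V → Prop
  | Sum.inl _, _ => False
  | Sum.inr A, B => A.1 = B

end PSym

/-- `L` is a path: a nonempty sequence of elements of `T ∪ T⁰` in which the range of each
symbol meets the source of the next one. -/
def IsPath (N : Network V T) (L : List (PSym N)) : Prop :=
  L ≠ [] ∧ ∀ (i : ℕ) (a b : PSym N), L[i]? = some a → L[i + 1]? = some b →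
    (a.rng ∩ b.src).Nonempty

/-- `L` is linear: the range of each symbol equals the source of the next one. -/
def IsLinear (N : Network V T) (L : List (PSym N)) : Prop :=
  ∀ (i : ℕ) (a b : PSym N), L[i]? = some a → L[i + 1]? = some b → a.rng = b.src

/-- `L = t₁⋯tₙ` is reduced: `t_{n-1} ≠ s(tₙ)` and, for `1 < i < n`,
`t_{i-1} ≠ s(tᵢ)` and `t_{i+1} ≠ r(tᵢ)`. -/
def IsReducedPath (N : Network V T) (L : List (PSym N)) : Prop :=
  (∀ (i : ℕ) (a b : PSym N), L[i]? = some a → L[i + 1]? = some b →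
      i + 2 = L.length → ¬ a.IsVerOf b.src) ∧
  (∀ (i : ℕ) (a b c : PSym N), L[i]? = some a → L[i + 1]? = some b → L[i + 2]? = some c →
      ¬ a.IsVerOf b.src ∧ ¬ c.IsVerOf b.rng)

/-- `RP(Γ)`: reduced paths. -/
def RP (N : Network V T) : Set (List (PSym N)) :=
  { L | IsPath N L ∧ IsReducedPath N L }

/-- `RLP(Γ)`: reduced linear paths. -/
def RLP (N : Network V T) : Set (List (PSym N)) :=
  { L | IsPath N L ∧ IsLinear N L ∧ IsReducedPath N L }

/-- The source `s(α)` of a path. -/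
def pathSrc (N : Network V T) (L : List (PSym N)) : Set V :=
  match L.head? with
  | some a => a.src
  | none => ∅

/-- The range `r(α)` of a path. -/
def pathRng (N : Network V T) (L : List (PSym N)) : Set V :=
  match L.getLast? with
  | some a => a.rng
  | none => ∅

/-- The path is a single symbol from `T⁰` (an "empty path"). -/
def InT0Path (N : Network V T) (L : List (PSym N)) : Prop :=
  ∃ A : N.T0, L = [Sum.inr A]

/-- The word of the free semigroup determined by a nonempty list of generators
(by convention the empty list is sent to the word `0`). -/
def genWord {N : Network V T} : List (Gen N) → FreeSemigroup (Gen N)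
  | [] => of .zero
  | a :: M => ⟨a, M⟩

/-- The word `α` of a path `α`. -/
def word {N : Network V T} (L : List (PSym N)) : FreeSemigroup (Gen N) :=
  genWord (L.map PSym.toGen)

/-- The word `α⁻¹ = tₙ⁻¹⋯t₁⁻¹` of a path `α = t₁⋯tₙ`. -/
def invWord {N : Network V T} (L : List (PSym N)) : FreeSemigroup (Gen N) :=
  genWord (L.reverse.map PSym.toInvGen)

/-- `αβ⁻¹` is in right normal form: `α ∈ RP(Γ)`, `β ∈ RLP(Γ)` and `r(α) = r(β)`. -/
def IsRNF (N : Network V T) (α β : List (PSym N)) : Prop :=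
  α ∈ RP N ∧ β ∈ RLP N ∧ pathRng N α = pathRng N β

/-- The element `[αβ⁻¹]` of `Q_Γ`. -/
def Qrnf (N : Network V T) (α β : List (PSym N)) : QGamma N :=
  Qofw (word α * invWord β)

/-- The relation `L*`: `a L* b` iff for all `x, y ∈ S¹`, `ax = ay ⇔ bx = by`. -/
def LStar {S : Type*} [Semigroup S] (a b : S) : Prop :=
  ∀ x y : WithOne S,
    (a : WithOne S) * x = (a : WithOne S) * y ↔ (b : WithOne S) * x = (b : WithOne S) * y

/-- The relation `R*`: `a R* b` iff for all `x, y ∈ S¹`, `xa = ya ⇔ xb = yb`. -/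
def RStar {S : Type*} [Semigroup S] (a b : S) : Prop :=
  ∀ x y : WithOne S,
    x * (a : WithOne S) = y * (a : WithOne S) ↔ x * (b : WithOne S) = y * (b : WithOne S)

/-- Green's relation `R`: `a R b` iff `aS¹ = bS¹`. -/
def GreenR {S : Type*} [Semigroup S] (a b : S) : Prop :=
  (∃ x : WithOne S, (a : WithOne S) * x = b) ∧ ∃ y : WithOne S, (b : WithOne S) * y = a

/-- Green's relation `L`: `a L b` iff `S¹a = S¹b`. -/
def GreenL {S : Type*} [Semigroup S] (a b : S) : Prop :=
  (∃ x : WithOne S, x * (a : WithOne S) = b) ∧ ∃ y : WithOne S, y * (b : WithOne S) = a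

/-- Green's relation `H = L ∩ R`. -/
def GreenH {S : Type*} [Semigroup S] (a b : S) : Prop :=
  GreenL a b ∧ GreenR a b


/-- Two networks are isomorphic: there exist bijections of vertices and relations commuting
with the source and range maps. -/
def NetworkIso {V₁ T₁ V₂ T₂ : Type} (N : Network V₁ T₁) (M : Network V₂ T₂) : Prop :=
  ∃ (φV : V₁ ≃ V₂) (φT : T₁ ≃ T₂),
    ∀ t : T₁, φV '' N.s t = M.s (φT t) ∧ φV '' N.r t = M.r (φT t)

/-! ### Normal forms in `Q_Γ` -/

section NormalForm

variable {N : Network V T}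

theorem T0_nonempty (A : N.T0) : A.1.Nonempty := by
  obtain ⟨A, ⟨t, rfl⟩ | ⟨t, rfl⟩ | ⟨v, rfl⟩⟩ := A
  · exact N.s_nonempty t
  · exact N.r_nonempty t
  · exact ⟨v, rfl⟩

/-- The source of `t` as an element of `T⁰`. -/
def srcT (N : Network V T) (t : T) : N.T0 := ⟨N.s t, Or.inl ⟨t, rfl⟩⟩

/-- The range of `t` as an element of `T⁰`. -/
def rngT (N : Network V T) (t : T) : N.T0 := ⟨N.r t, Or.inr (Or.inl ⟨t, rfl⟩)⟩

/-- The singleton of `v` as an element of `T⁰`. -/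
def single (N : Network V T) (v : V) : N.T0 := ⟨{v}, Or.inr (Or.inr ⟨v, rfl⟩)⟩

/-- The two-letter word `gh` cannot be rewritten: it is neither zero in `Q_Γ` nor equal to a
single generator. -/
def Ok : Gen N → Gen N → Prop
  | .ver B, h => h.srcSet ≠ B.1 ∧ B.1 ∩ h.srcSet ≠ ∅
  | .pos t, h => h ≠ .ver (rngT N t) ∧ N.r t ∩ h.srcSet ≠ ∅
  | .neg t, h => ∃ t', h = .neg t' ∧ N.r t' = N.s t
  | .zero, _ => False

/-- Irreducible words. -/
abbrev Irr (w : List (Gen N)) : Prop := List.IsChain Ok w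

open Classical in
/-- Left multiplication of an irreducible word by an element of `T⁰`, followed by reduction;
`none` stands for `0` and the empty list for an adjoined identity. -/
noncomputable def att (B : N.T0) : List (Gen N) → Option (List (Gen N))
  | [] => some [.ver B]
  | h :: w => if h.srcSet = B.1 then some (h :: w)
      else if B.1 ∩ h.srcSet = ∅ then none else some (.ver B :: h :: w)

open Classical in
/-- Left multiplication of an irreducible word by a generator, followed by reduction. In the case
of `t⁻¹A⋯` with `A = s(t)`, a further letter makes the product `0`: in an irreducible word
that letter has a source different from `A`. -/
noncomputable def act : Gen N → List (Gen N) → Option (List (Gen N))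
  | .ver B, w => att B w
  | .pos t, [] => some [.pos t]
  | .pos t, h :: w => if h = .ver (rngT N t) then some (.pos t :: w)
      else if N.r t ∩ h.srcSet = ∅ then none else some (.pos t :: h :: w)
  | .neg t, [] => some [.neg t]
  | .neg t, .pos t' :: w => if t' = t then att (rngT N t) w else none
  | .neg t, .neg t' :: w => if N.r t' = N.s t then some (.neg t :: .neg t' :: w) else none
  | .neg t, [.ver A] => if A.1 = N.s t then some [.neg t] else none
  | .neg _, .ver _ :: _ :: _ => none
  | .neg _, .zero :: _ => none
  | .zero, _ => none

theorem ver_eq_iff {A B : N.T0} : (Gen.ver A : Gen N) = .ver B ↔ A.1 = B.1 := by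
  constructor
  · intro h; cases h; rfl
  · intro h; rw [Subtype.ext (a1 := A) (a2 := B) h]

theorem att_src {B : N.T0} {w w' : List (Gen N)} (h : att B w = some w') :
    ∃ g l, w' = g :: l ∧ g.srcSet = B.1 := by
  cases w with
  | nil => simp only [att, Option.some.injEq] at h; exact ⟨_, _, h.symm, rfl⟩
  | cons a w =>
    simp only [att] at h
    split_ifs at h with h1 h2
    · simp only [Option.some.injEq] at h; exact ⟨_, _, h.symm, h1⟩
    · simp only [Option.some.injEq] at h; exact ⟨_, _, h.symm, rfl⟩

/-- Reduction keeps the source of the first letter. -/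
theorem act_src {g : Gen N} {w w' : List (Gen N)} (h : act g w = some w') :
    ∃ g' l, w' = g' :: l ∧ g'.srcSet = g.srcSet := by
  match g, w with
  | .ver B, w => exact att_src h
  | .pos t, [] => simp only [act, Option.some.injEq] at h; exact ⟨_, _, h.symm, rfl⟩
  | .pos t, a :: w =>
    simp only [act] at h
    split_ifs at h <;> simp only [Option.some.injEq] at h <;> exact ⟨_, _, h.symm, rfl⟩
  | .neg t, [] => simp only [act, Option.some.injEq] at h; exact ⟨_, _, h.symm, rfl⟩
  | .neg t, .pos t' :: w =>
    simp only [act] at h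
    split_ifs at h
    exact att_src h
  | .neg t, .neg t' :: w =>
    simp only [act] at h
    split_ifs at h
    simp only [Option.some.injEq] at h; exact ⟨_, _, h.symm, rfl⟩
  | .neg t, [.ver A] =>
    simp only [act] at h
    split_ifs at h
    simp only [Option.some.injEq] at h; exact ⟨_, _, h.symm, rfl⟩
  | .neg _, .ver _ :: _ :: _ => simp [act] at h
  | .neg _, .zero :: _ => simp [act] at h
  | .zero, _ => simp [act] at h

theorem att_irr {B : N.T0} {w w' : List (Gen N)} (hw : Irr w) (h : att B w = some w') :
    Irr w' := by
  cases w with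
  | nil => simp only [att, Option.some.injEq] at h; subst h; exact List.IsChain.singleton _
  | cons a w =>
    simp only [att] at h
    split_ifs at h with h1 h2
    · simp only [Option.some.injEq] at h; exact h ▸ hw
    · simp only [Option.some.injEq] at h; subst h
      exact List.IsChain.cons_cons ⟨h1, h2⟩ hw

theorem irr_tail {g : Gen N} {w : List (Gen N)} (h : Irr (g :: w)) : Irr w := h.tail

theorem irr_cons_cons {g h : Gen N} {w : List (Gen N)} :
    Irr (g :: h :: w) ↔ Ok g h ∧ Irr (h :: w) := List.isChain_cons_cons

theorem act_irr {g : Gen N} {w w' : List (Gen N)} (hw : Irr w) (h : act g w = some w') :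
    Irr w' := by
  match g, w with
  | .ver B, w => exact att_irr hw h
  | .pos t, [] => 
    simp only [act, Option.some.injEq] at h; subst h; exact List.IsChain.singleton _
  | .pos t, a :: w =>
    simp only [act] at h
    split_ifs at h with h1 h2 <;> simp only [Option.some.injEq] at h <;> subst h
    · cases w with
      | nil => exact List.IsChain.singleton _
      | cons b w =>
        subst h1
        obtain ⟨⟨h3, h4⟩, h5⟩ := irr_cons_cons.1 hw
        refine irr_cons_cons.2 ⟨⟨?_, h4⟩, h5⟩
        rintro rfl
        exact h3 rfl
    · exact irr_cons_cons.2 ⟨⟨h1, h2⟩, hw⟩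
  | .neg t, [] =>
    simp only [act, Option.some.injEq] at h; subst h; exact List.IsChain.singleton _
  | .neg t, .pos t' :: w =>
    simp only [act] at h
    split_ifs at h
    exact att_irr (irr_tail hw) h
  | .neg t, .neg t' :: w =>
    simp only [act] at h
    split_ifs at h with h1
    simp only [Option.some.injEq] at h; subst h
    exact irr_cons_cons.2 ⟨⟨t', rfl, h1⟩, hw⟩
  | .neg t, [.ver A] =>
    simp only [act] at h
    split_ifs at h
    simp only [Option.some.injEq] at h; subst h; exact List.IsChain.singleton _
  | .neg _, .ver _ :: _ :: _ => simp [act] at h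
  | .neg _, .zero :: _ => simp [act] at h
  | .zero, _ => simp [act] at h

/-- A generator annihilates an irreducible word whose source does not meet its range. -/
theorem act_disjoint {g h : Gen N} {w : List (Gen N)} (hd : g.rngSet ∩ h.srcSet = ∅) :
    act g (h :: w) = none := by
  match g, h, w with
  | .ver B, h, w =>
    have hne := (T0_nonempty B).ne_empty
    simp only [Gen.rngSet] at hd
    simp only [act, att, hd, if_true]
    rw [if_neg]
    intro h1
    rw [h1, Set.inter_self] at hd
    exact hne hd
  | .pos t, h, w =>
    have hne := (N.r_nonempty t).ne_empty
    simp only [Gen.rngSet] at hd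
    simp only [act, hd, if_true]
    rw [if_neg]
    rintro rfl
    simp only [Gen.srcSet, rngT, Set.inter_self] at hd
    exact hne hd
  | .neg t, .pos t', w =>
    have hne := (N.s_nonempty t).ne_empty
    simp only [act]
    rw [if_neg]
    rintro rfl
    simp only [Gen.rngSet, Gen.srcSet, Set.inter_self] at hd
    exact hne hd
  | .neg t, .neg t', w =>
    have hne := (N.s_nonempty t).ne_empty
    simp only [act]
    rw [if_neg]
    intro h1
    simp only [Gen.rngSet, Gen.srcSet, h1, Set.inter_self] at hd
    exact hne hd
  | .neg t, .ver A, [] =>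
    have hne := (N.s_nonempty t).ne_empty
    simp only [act]
    rw [if_neg]
    intro h1
    simp only [Gen.rngSet, Gen.srcSet, h1, Set.inter_self] at hd
    exact hne hd
  | .neg t, .ver A, b :: w => rfl
  | .neg _, .zero, _ => rfl
  | .zero, _, _ => rfl

/-- An inverse `t⁻¹` annihilates every irreducible word whose source is not `s(t)`. -/
theorem act_neg_of_ne {t : T} {h : Gen N} {w : List (Gen N)} (hd : h.srcSet ≠ N.s t) :
    act (.neg t) (h :: w) = none := by
  match h, w with
  | .pos t', w =>
    simp only [act]
    rw [if_neg]
    rintro rfl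
    exact hd rfl
  | .neg t', w =>
    simp only [act]
    rw [if_neg]
    exact hd
  | .ver A, [] =>
    simp only [act]
    rw [if_neg]
    exact hd
  | .ver A, b :: w => rfl
  | .zero, _ => rfl

/-- The action of a generator, extended by `0 ↦ 0`. -/
noncomputable def actO (g : Gen N) (o : Option (List (Gen N))) : Option (List (Gen N)) :=
  o.bind (act g)

theorem att_of_src {B : N.T0} {h : Gen N} {w : List (Gen N)} (hs : h.srcSet = B.1) :
    att B (h :: w) = some (h :: w) := by simp [att, hs]

/-- Compatibility of the action with `s(g)g = g`. -/
theorem actO_src (g : Gen N) (hg : g ≠ .zero) (w : List (Gen N)) :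
    actO g.srcGen (act g w) = act g w := by
  cases hw : act g w with
  | none => rfl
  | some w' =>
    obtain ⟨g', l, rfl, h⟩ := act_src hw
    cases g with
    | zero => exact absurd rfl hg
    | _ => exact att_of_src h

/-- Compatibility of the action with `g r(g) = g`. -/
theorem actO_rng (g : Gen N) (hg : g ≠ .zero) (w : List (Gen N)) :
    actO g (actO g.rngGen (some w)) = act g w := by
  cases g with
  | zero => exact absurd rfl hg
  | ver B =>
    exact actO_src (.ver B) hg w
  | pos t =>
    change (att (rngT N t) w).bind (act (.pos t)) = _
    cases w with
    | nil => simp [att, act]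
    | cons h w =>
      rw [att]
      split_ifs with h1 h2
      · rfl
      · exact (act_disjoint (g := .pos t) h2).symm
      · have h3 : h ≠ .ver (rngT N t) := by rintro rfl; exact h1 rfl
        have h2' : ¬ N.r t ∩ h.srcSet = ∅ := h2
        simp [act, h3, h2']
  | neg t =>
    change (att (srcT N t) w).bind (act (.neg t)) = _
    cases w with
    | nil => simp [att, act, srcT]
    | cons h w =>
      rw [att]
      split_ifs with h1 h2
      · rfl
      · exact (act_disjoint (g := .neg t) h2).symm
      · rw [act_neg_of_ne h1]; rfl

/-- Compatibility of the action with `t⁻¹t = r(t)`. Irreducibility is needed when `w = r(t)w'`: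
then `w'` must not absorb `r(t)`. -/
theorem actO_neg_pos (t : T) {w : List (Gen N)} (hw : Irr w) :
    actO (.neg t) (act (.pos t) w) = act (.ver (rngT N t)) w := by
  cases w with
  | nil => simp [actO, act, att]
  | cons h w =>
    simp only [act]
    split_ifs with h1 h2
    · subst h1
      rw [att_of_src rfl]
      simp only [actO, Option.bind_some, act, if_true]
      cases w with
      | nil => rfl
      | cons k w =>
        obtain ⟨⟨h3, h4⟩, h5⟩ := irr_cons_cons.1 hw
        simp [att, h3, h4]
    · symm
      exact act_disjoint (g := .ver (rngT N t)) h2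
    · simp [actO, act]

/-- The action of words on irreducible words. -/
noncomputable def wact : FreeSemigroup (Gen N) →ₙ* Function.End (Option (List (Gen N))) :=
  FreeSemigroup.lift actO

theorem wact_of (g : Gen N) (o) : wact (of g) o = actO g o := by
  rfl

theorem wact_mul (a b : FreeSemigroup (Gen N)) (o) : wact (a * b) o = wact a (wact b o) := by
  rw [map_mul]; rfl

/-- `0` or an irreducible word. -/
def IrrO (o : Option (List (Gen N))) : Prop := ∀ w, o = some w → Irr w

theorem wact_irr (a : FreeSemigroup (Gen N)) : ∀ o, IrrO o → IrrO (wact a o) := by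
  induction a using FreeSemigroup.recOnMul with
  | ih1 g =>
    intro o ho w hw
    rw [wact_of] at hw
    cases o with
    | none => simp [actO] at hw
    | some v => exact act_irr (ho v rfl) hw
  | ih2 g a h1 h2 =>
    intro o ho
    rw [wact_mul]
    exact h1 _ (h2 _ ho)

/-- The congruence of acting in the same way on irreducible words. -/
noncomputable def actCon (N : Network V T) : Con (FreeSemigroup (Gen N)) where
  r a b := ∀ o, IrrO o → wact a o = wact b o
  iseqv := ⟨fun _ _ _ => rfl, fun h o ho => (h o ho).symm,
    fun h h' o ho => (h o ho).trans (h' o ho)⟩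
  mul' := by
    intro a b c d h h' o ho
    rw [wact_mul, wact_mul, h' o ho, h _ (wact_irr d o ho)]

theorem actO_none (g : Gen N) : actO g none = none := rfl

theorem actO_zero (o : Option (List (Gen N))) : actO .zero o = none := by
  cases o <;> simp [actO, act]

/-- The defining relations of `Q_Γ` hold in the action on irreducible words. -/
theorem QCon_le : QCon N ≤ actCon N := by
  refine Con.conGen_le.2 ?_
  intro a b hab o ho
  cases o with
  | none =>
    cases hab <;> simp only [wact_of, wact_mul, actO_none]
  | some w =>
    cases hab with
    | nr1l g hg =>
      simp only [wact_of, wact_mul]; exact actO_src g hg w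
    | nr1r g hg =>
      simp only [wact_of, wact_mul]; exact actO_rng g hg w
    | nr2 g₁ g₂ h₁ h₂ h =>
      simp only [wact_of, wact_mul, actO_zero]
      change actO g₁ (act g₂ w) = none
      cases hw : act g₂ w with
      | none => rfl
      | some w' =>
        obtain ⟨g', l, rfl, h'⟩ := act_src hw
        exact act_disjoint (by rw [h', h])
    | nr3 t₁ t₂ h =>
      simp only [wact_of, wact_mul, actO_zero]
      change actO (.neg t₁) (act (.pos t₂) w) = none
      cases w with
      | nil => simp [actO, act, h.symm]
      | cons a w =>
        simp only [act]
        split_ifs <;> simp [actO, act, h.symm]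
    | nr4 t =>
      simp only [wact_of, wact_mul]; exact actO_neg_pos t (ho w rfl)
    | nr5 t A h =>
      simp only [wact_of, wact_mul, actO_zero]
      change actO (.neg t) (att A w) = none
      cases hw : att A w with
      | none => rfl
      | some w' =>
        obtain ⟨g', l, rfl, h'⟩ := att_src hw
        exact act_neg_of_ne (by rw [h']; exact h)
    | nr6l x => simp only [wact_of, wact_mul, actO_zero]
    | nr6r x => simp only [wact_of, wact_mul, actO_zero, actO_none]

theorem irrO_nil : IrrO (some [] : Option (List (Gen N))) := by
  intro w hw; cases hw; exact List.IsChain.nil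

/-- The normal form of an element of `Q_Γ`: its action on the empty word. -/
noncomputable def nf (x : QGamma N) : Option (List (Gen N)) :=
  Con.liftOn x (fun a => wact a (some [])) fun _ _ h => QCon_le h _ irrO_nil

theorem nf_Qofw (a : FreeSemigroup (Gen N)) : nf (Qofw a) = wact a (some []) := rfl

theorem nf_irr (x : QGamma N) : IrrO (nf x) := by
  induction x using Con.induction_on with
  | H a => exact wact_irr a _ irrO_nil

theorem nf_mul (a : FreeSemigroup (Gen N)) (x : QGamma N) :
    nf (Qofw a * x) = wact a (nf x) := by
  induction x using Con.induction_on with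
  | H b => exact wact_mul a b _

/-- The class of a generator. -/
def gq (g : Gen N) : QGamma N := Qofw (of g)

theorem nf_gq_mul (g : Gen N) (x : QGamma N) : nf (gq g * x) = actO g (nf x) := by
  rw [gq, nf_mul, wact_of]

theorem nf_gq (g : Gen N) : nf (gq g) = act g [] := by
  rw [gq, nf_Qofw, wact_of]; rfl

theorem rel_eq {a b : FreeSemigroup (Gen N)} (h : NRel N a b) : Qofw a = Qofw b :=
  (Con.eq _).2 (Con.le_conGen _ _ h)

theorem gq_src (g : Gen N) : gq g.srcGen * gq g = gq g := by
  by_cases hg : g = .zero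
  · subst hg; exact rel_eq (.nr6l _)
  · exact rel_eq (.nr1l g hg)

theorem gq_rng (g : Gen N) : gq g * gq g.rngGen = gq g := by
  by_cases hg : g = .zero
  · subst hg; exact rel_eq (.nr6l _)
  · exact rel_eq (.nr1r g hg)

theorem gq_zero_mul (x : QGamma N) : gq .zero * x = gq .zero := by
  induction x using Con.induction_on with
  | H a =>
    change gq .zero * Qofw a = _
    induction a using FreeSemigroup.recOnMul with
    | ih1 g => exact rel_eq (.nr6l g)
    | ih2 g a h1 h2 =>
      change gq .zero * (Qofw (of g) * Qofw a) = _
      rw [← mul_assoc, h1, h2]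

theorem mul_gq_zero (x : QGamma N) : x * gq .zero = gq .zero := by
  induction x using Con.induction_on with
  | H a =>
    change Qofw a * gq .zero = _
    induction a using FreeSemigroup.recOnMul with
    | ih1 g => exact rel_eq (.nr6r g)
    | ih2 g a h1 h2 =>
      change (Qofw (of g) * Qofw a) * gq .zero = _
      rw [mul_assoc, h2, h1]

theorem gq_disjoint {g h : Gen N} (hd : g.rngSet ∩ h.srcSet = ∅) :
    gq g * gq h = gq .zero := by
  by_cases hg : g = .zero
  · subst hg; exact gq_zero_mul _
  by_cases hh : h = .zero
  · subst hh; exact mul_gq_zero _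
  exact rel_eq (.nr2 g h hg hh hd)

theorem srcGen_cases (g : Gen N) :
    g = .zero ∨ ∃ A : N.T0, g.srcGen = .ver A ∧ A.1 = g.srcSet := by
  cases g with
  | zero => exact Or.inl rfl
  | _ => exact Or.inr ⟨_, rfl, rfl⟩

theorem gq_neg_of_ne {t : T} {h : Gen N} (hd : h.srcSet ≠ N.s t) :
    gq (.neg t) * gq h = gq .zero := by
  have key : ∀ A : N.T0, A.1 ≠ N.s t → gq (.neg t) * gq (.ver A) = gq .zero :=
    fun A hA => rel_eq (.nr5 t A hA)
  rw [← gq_src h, ← mul_assoc]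
  obtain rfl | ⟨A, hA, hs⟩ := srcGen_cases h
  · exact mul_gq_zero _
  · rw [hA, key A (hs ▸ hd), gq_zero_mul]

/-- The element of `Q_Γ` represented by a list (`0` for `none` and for the empty list). -/
def back : Option (List (Gen N)) → QGamma N
  | none => gq .zero
  | some w => Qofw (genWord w)

theorem back_cons (g h : Gen N) (w : List (Gen N)) :
    back (some (g :: h :: w)) = gq g * back (some (h :: w)) := rfl

theorem back_single (g : Gen N) : back (some [g]) = gq g := rfl

theorem gq_mul_back_eq {g h k : Gen N} (e : gq g * gq h = gq k) (w : List (Gen N)) :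
    gq g * back (some (h :: w)) = back (some (k :: w)) := by
  cases w with
  | nil => exact e
  | cons l w => rw [back_cons, back_cons, ← mul_assoc, e]

theorem gq_mul_back_zero {g h : Gen N} (e : gq g * gq h = gq .zero) (w : List (Gen N)) :
    gq g * back (some (h :: w)) = gq .zero := by
  cases w with
  | nil => exact e
  | cons l w => rw [back_cons, ← mul_assoc, e, gq_zero_mul]

theorem back_att (B : N.T0) (h : Gen N) (w : List (Gen N)) :
    back (att B (h :: w)) = gq (.ver B) * back (some (h :: w)) := by
  rw [att]
  split_ifs with h1 h2
  · have : gq (.ver B) * gq h = gq h := by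
      obtain rfl | ⟨A, hA, hs⟩ := srcGen_cases h
      · exact mul_gq_zero _
      · rw [← ver_eq_iff.2 (hs.trans h1), ← hA]
        exact gq_src _
    rw [gq_mul_back_eq this]
  · exact (gq_mul_back_zero (gq_disjoint (g := .ver B) h2) w).symm
  · rfl

theorem gq_neg_pos (t : T) : gq (.neg t) * gq (.pos t) = gq (.ver (rngT N t)) :=
  rel_eq (.nr4 t)

/-- Each reduction step performed by `act` is an identity in `Q_Γ`. -/
theorem back_act (g h : Gen N) (w : List (Gen N)) (hw : Irr (h :: w)) :
    back (act g (h :: w)) = gq g * back (some (h :: w)) := by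
  match g, h, w with
  | .ver B, h, w => exact back_att B h w
  | .pos t, h, w =>
    simp only [act]
    split_ifs with h1 h2
    · subst h1
      exact (gq_mul_back_eq (gq_rng (.pos t)) w).symm
    · exact (gq_mul_back_zero (gq_disjoint (g := .pos t) h2) w).symm
    · rfl
  | .neg t, .pos t', w =>
    simp only [act]
    split_ifs with h1
    · subst h1
      cases w with
      | nil => exact (gq_neg_pos t').symm
      | cons k w => rw [back_att, back_cons, ← mul_assoc, gq_neg_pos]
    · exact (gq_mul_back_zero (rel_eq (.nr3 t t' (Ne.symm h1))) w).symm
  | .neg t, .neg t', w =>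
    simp only [act]
    split_ifs with h1
    · rfl
    · exact (gq_mul_back_zero (gq_neg_of_ne (h := .neg t') h1) w).symm
  | .neg t, .ver A, [] =>
    simp only [act]
    split_ifs with h1
    · rw [back_single, back_single, ver_eq_iff.2 (show A.1 = (srcT N t).1 from h1)]
      exact (gq_rng (.neg t)).symm
    · exact (gq_neg_of_ne (h := .ver A) h1).symm
  | .neg t, .ver A, b :: w =>
    obtain ⟨⟨h3, h4⟩, h5⟩ := irr_cons_cons.1 hw
    simp only [act]
    by_cases h1 : A.1 = N.s t
    · rw [back_cons, ← mul_assoc, ver_eq_iff.2 (show A.1 = (srcT N t).1 from h1)]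
      change _ = gq (.neg t) * gq (Gen.neg t).rngGen * _
      rw [gq_rng]
      exact (gq_mul_back_zero (gq_neg_of_ne (h1 ▸ h3)) w).symm
    · exact (gq_mul_back_zero (gq_neg_of_ne (h := .ver A) h1) _).symm
  | .neg _, .zero, w =>
    exact (gq_mul_back_zero (mul_gq_zero _) w).symm
  | .zero, _, _ => exact (gq_zero_mul _).symm

theorem nf_ne_nil (x : QGamma N) : nf x ≠ some [] := by
  have key : ∀ (a : FreeSemigroup (Gen N)) o, wact a o ≠ some [] := by
    intro a
    induction a using FreeSemigroup.recOnMul with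
    | ih1 g =>
      intro o h
      rw [wact_of] at h
      cases o with
      | none => cases h
      | some w =>
        obtain ⟨_, _, h', _⟩ := act_src (g := g) (w := w) h
        cases h'
    | ih2 g a h1 h2 => intro o; rw [wact_mul]; exact h1 _
  induction x using Con.induction_on with
  | H a => exact key a _

/-- Every element is represented by its normal form; hence normal forms determine elements. -/
theorem back_nf (x : QGamma N) : back (nf x) = x := by
  induction x using Con.induction_on with
  | H a =>
    obtain ⟨g, l⟩ := a
    induction l generalizing g with
    | nil =>
      change back (nf (gq g)) = gq g
      rw [nf_gq]
      cases g <;> rfl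
    | cons h l ih =>
      change back (nf (gq g * Qofw ⟨h, l⟩)) = gq g * Qofw ⟨h, l⟩
      have ih' : back (nf (Qofw ⟨h, l⟩)) = Qofw ⟨h, l⟩ := ih h
      rw [nf_gq_mul, ← ih']
      have hirr := nf_irr (Qofw ⟨h, l⟩ : QGamma N)
      have hnil := nf_ne_nil (Qofw ⟨h, l⟩ : QGamma N)
      rw [ih']
      conv_rhs => rw [← ih']
      cases hn : nf (Qofw ⟨h, l⟩ : QGamma N) with
      | none => exact (mul_gq_zero _).symm
      | some w =>
        cases w with
        | nil => exact absurd hn hnil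
        | cons k w => exact back_act g k w (hirr _ hn)

end NormalForm

/-! ### Intrinsic descriptions of vertices, linear paths and relations -/

section Intrinsic

variable {S S' : Type*} [Mul S] [Mul S']

/-- `z` is a two-sided zero. -/
def IsZeroEl (z : S) : Prop := ∀ x, z * x = z ∧ x * z = z

/-- The intrinsic description of the elements of `T⁰` in `Q_Γ`: the elements other than `0` that
are fixed under right multiplication by no element other than themselves. -/
def IsVtx (e : S) : Prop := ¬ IsZeroEl e ∧ ∀ f, e * f = e → f = e

/-- The intrinsic description of the linear paths in `Q_Γ`: some left multiple of `x` lies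
in `T⁰`. -/
def IsLin (x : S) : Prop := ∃ y, IsVtx (y * x)

/-- The intrinsic description of the elements of `T` in `Q_Γ`: linear paths outside `T⁰` that
do not factor properly into linear paths. -/
def IsEdge (x : S) : Prop :=
  IsLin x ∧ ¬ IsVtx x ∧ ∀ u v, IsLin u → IsLin v → x = u * v → IsVtx u ∨ IsVtx v

theorem IsZeroEl.of_map (e : S ≃* S') {z : S} (h : IsZeroEl (e z)) : IsZeroEl z := by
  intro x
  obtain ⟨h1, h2⟩ := h (e x)
  rw [← map_mul] at h1 h2
  exact ⟨e.injective h1, e.injective h2⟩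

theorem IsVtx.map (e : S ≃* S') {x : S} (h : IsVtx x) : IsVtx (e x) := by
  refine ⟨fun hz => h.1 (hz.of_map e), fun f hf => ?_⟩
  obtain ⟨f, rfl⟩ := e.surjective f
  rw [← map_mul] at hf
  rw [h.2 f (e.injective hf)]

theorem IsVtx.of_map (e : S ≃* S') {x : S} (h : IsVtx (e x)) : IsVtx x := by
  have := h.map e.symm
  rwa [e.symm_apply_apply] at this

theorem IsLin.map (e : S ≃* S') {x : S} (h : IsLin x) : IsLin (e x) := by
  obtain ⟨y, hy⟩ := h
  exact ⟨e y, by rw [← map_mul]; exact hy.map e⟩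

theorem IsLin.of_map (e : S ≃* S') {x : S} (h : IsLin (e x)) : IsLin x := by
  have := h.map e.symm
  rwa [e.symm_apply_apply] at this

theorem IsEdge.map (e : S ≃* S') {x : S} (h : IsEdge x) : IsEdge (e x) := by
  refine ⟨h.1.map e, fun hx => h.2.1 (hx.of_map e), fun u v hu hv huv => ?_⟩
  obtain ⟨u, rfl⟩ := e.surjective u
  obtain ⟨v, rfl⟩ := e.surjective v
  rw [← map_mul] at huv
  exact (h.2.2 u v (hu.of_map e) (hv.of_map e) (e.injective huv)).imp
    (IsVtx.map e) (IsVtx.map e)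

end Intrinsic

/-! ### The intrinsic notions in `Q_Γ` -/

section Recover

variable {N : Network V T}

theorem nf_injective : Function.Injective (nf : QGamma N → _) := fun x y h => by
  rw [← back_nf x, h, back_nf]

theorem nf_zero : nf (gq .zero : QGamma N) = none := nf_gq _

theorem eq_zero_of_nf {x : QGamma N} (h : nf x = none) : x = gq .zero :=
  nf_injective (h.trans nf_zero.symm)

theorem isZeroEl_iff {x : QGamma N} : IsZeroEl x ↔ x = gq .zero := by
  constructor
  · intro h
    rw [← (h (gq .zero)).1, mul_gq_zero]
  · rintro rfl x
    exact ⟨gq_zero_mul x, mul_gq_zero x⟩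

theorem map_zero' {V' T' : Type} {M : Network V' T'} (e : QGamma N ≃* QGamma M) :
    e (gq .zero) = gq .zero := by
  rw [← isZeroEl_iff]
  refine IsZeroEl.of_map e.symm ?_
  rw [e.symm_apply_apply, isZeroEl_iff]

theorem nf_ver (A : N.T0) : nf (gq (.ver A) : QGamma N) = some [.ver A] := nf_gq _

theorem nf_pos (t : T) : nf (gq (.pos t) : QGamma N) = some [.pos t] := nf_gq _

theorem isVtx_ver (A : N.T0) : IsVtx (gq (.ver A) : QGamma N) := by
  constructor
  · rw [isZeroEl_iff]
    intro h
    have := congrArg nf h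
    rw [nf_ver, nf_zero] at this
    cases this
  · intro f hf
    have h := congrArg nf hf
    rw [nf_gq_mul, nf_ver] at h
    apply nf_injective
    rw [nf_ver]
    cases hn : nf f with
    | none => rw [hn] at h; cases h
    | some w =>
      rw [hn] at h
      cases w with
      | nil => exact absurd hn (nf_ne_nil f)
      | cons k w =>
        change att A (k :: w) = _ at h
        rw [att] at h
        split_ifs at h with h1 h2
        · exact h
        · simp at h

/-- An element ending in the letter `h` is fixed under right multiplication by `r(h)`. -/
theorem exists_rng (x : QGamma N) : ∃ h : Gen N, x * gq h.rngGen = x := by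
  induction x using Con.induction_on with
  | H a =>
    change ∃ h : Gen N, Qofw a * gq h.rngGen = Qofw a
    induction a using FreeSemigroup.recOnMul with
    | ih1 g => exact ⟨g, gq_rng g⟩
    | ih2 g a h1 h2 =>
      obtain ⟨h, h3⟩ := h2
      have e : Qofw (of g * a) = gq g * Qofw a := rfl
      exact ⟨h, by rw [e, mul_assoc, h3]⟩

/-- `IsVtx` singles out `T⁰`: an element ending in the letter `h` is fixed under right
multiplication by `r(h)`, so it can be in `IsVtx` only if it equals `r(h)`. -/
theorem isVtx_iff {x : QGamma N} : IsVtx x ↔ ∃ A, x = gq (.ver A) := by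
  constructor
  · intro hx
    obtain ⟨h, h1⟩ := exists_rng x
    have h3 := hx.2 _ h1
    cases h with
    | zero => exact absurd (isZeroEl_iff.2 h3.symm) hx.1
    | _ => exact ⟨_, h3.symm⟩
  · rintro ⟨A, rfl⟩
    exact isVtx_ver A

theorem ver_inj {A B : N.T0} (h : (gq (.ver A) : QGamma N) = gq (.ver B)) : A.1 = B.1 := by
  have := congrArg nf h
  rw [nf_ver, nf_ver] at this
  exact ver_eq_iff.1 (List.singleton_injective (Option.some.inj this))

theorem pos_inj {t t' : T} (h : (gq (.pos t) : QGamma N) = gq (.pos t')) : t = t' := by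
  have := congrArg nf h
  rw [nf_pos, nf_pos] at this
  simpa using this

theorem ver_mul_ver {A B : N.T0} :
    (gq (.ver A) * gq (.ver B) : QGamma N) = gq .zero ↔ A.1 ∩ B.1 = ∅ := by
  constructor
  · intro h
    have := congrArg nf h
    rw [nf_gq_mul, nf_ver, nf_zero] at this
    change att A [.ver B] = none at this
    rw [att] at this
    split_ifs at this with h1 h2
    exact h2
  · intro h
    exact gq_disjoint (g := .ver A) (h := .ver B) h

theorem ver_mul_ver_ne {A B : N.T0} :
    (gq (.ver A) * gq (.ver B) : QGamma N) ≠ gq .zero ↔ (A.1 ∩ B.1).Nonempty := by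
  rw [Ne, ver_mul_ver, ← ne_eq, ← Set.nonempty_iff_ne_empty]

theorem ver_mul_pos {A : N.T0} {t : T} (h : gq (.ver A) * gq (.pos t) = (gq (.pos t) : QGamma N)) :
    A.1 = N.s t := by
  have := congrArg nf h
  rw [nf_gq_mul, nf_pos] at this
  change att A [.pos t] = _ at this
  rw [att] at this
  split_ifs at this with h1 h2
  · exact h1.symm
  · simp at this

theorem pos_mul_ver {A : N.T0} {t : T} (h : gq (.pos t) * gq (.ver A) = (gq (.pos t) : QGamma N)) :
    A.1 = N.r t := by
  have := congrArg nf h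
  rw [nf_gq_mul, nf_pos, nf_ver] at this
  change act (.pos t) [.ver A] = _ at this
  rw [act] at this
  split_ifs at this with h1 h2
  · exact ver_eq_iff.1 h1
  · simp at this

/-- Irreducible words of linear paths. -/
inductive LinW (N : Network V T) : List (Gen N) → Prop
  | ver (A : N.T0) : LinW N [.ver A]
  | pos (t : T) : LinW N [.pos t]
  | cons (t t' : T) (w : List (Gen N)) : N.r t = N.s t' → LinW N (.pos t' :: w) →
      LinW N (.pos t :: .pos t' :: w)

theorem LinW.tail {g h : Gen N} {w : List (Gen N)} (hl : LinW N (g :: h :: w)) :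
    LinW N (h :: w) := by
  cases hl with
  | cons t t' w h1 h2 => exact h2

theorem LinW.of_att {B : N.T0} {h : Gen N} {w w' : List (Gen N)} (ha : att B (h :: w) = some w')
    (hl : LinW N w') : LinW N (h :: w) ∧ h.srcSet = B.1 := by
  rw [att] at ha
  split_ifs at ha with h1 h2
  · cases ha; exact ⟨hl, h1⟩
  · cases ha; cases hl

/-- If reducing `g·w` yields a linear path, then `w` was already one. -/
theorem LinW.of_act {g h : Gen N} {w w' : List (Gen N)} (hw : Irr (h :: w))
    (ha : act g (h :: w) = some w') (hl : LinW N w') : LinW N (h :: w) := by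
  match g, h, w with
  | .ver B, h, w => exact (LinW.of_att ha hl).1
  | .pos t, h, w =>
    rw [act] at ha
    split_ifs at ha with h1 h2
    · cases ha
      subst h1
      cases w with
      | nil => exact .ver _
      | cons k w =>
        obtain ⟨⟨h3, h4⟩, h5⟩ := irr_cons_cons.1 hw
        cases hl with
        | cons t t' w h6 h7 => exact absurd h6.symm h3
    · cases ha; exact hl.tail
  | .neg t, .pos t', w =>
    rw [act] at ha
    split_ifs at ha with h1
    subst h1
    cases w with
    | nil => exact .pos _
    | cons k w =>
      obtain ⟨⟨h3, h4⟩, h5⟩ := irr_cons_cons.1 hw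
      obtain ⟨h6, h7⟩ := LinW.of_att ha hl
      cases h6 with
      | ver A => exact absurd (ver_eq_iff.2 h7) h3
      | pos t => exact .cons _ _ _ h7.symm (.pos _)
      | cons t t' w h8 h9 => exact .cons _ _ _ h7.symm (.cons _ _ _ h8 h9)
  | .neg t, .neg t', w =>
    rw [act] at ha
    split_ifs at ha with h1
    cases ha; cases hl
  | .neg t, .ver A, [] => exact .ver _
  | .neg _, .ver _, _ :: _ => cases ha
  | .neg _, .zero, _ => cases ha
  | .zero, _, _ => cases ha

/-- If `yx` is a linear path, then so is `x`. -/
theorem LinW.of_mul (y x : QGamma N) :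
    (∃ w, nf (y * x) = some w ∧ LinW N w) → ∃ w, nf x = some w ∧ LinW N w := by
  induction y using Con.induction_on with
  | H a =>
    change (∃ w, nf (Qofw a * x) = some w ∧ LinW N w) → _
    induction a using FreeSemigroup.recOnMul generalizing x with
    | ih1 g =>
      rintro ⟨w, hw, hl⟩
      change nf (gq g * x) = _ at hw
      rw [nf_gq_mul] at hw
      cases hn : nf x with
      | none => rw [hn] at hw; cases hw
      | some v =>
        rw [hn] at hw
        cases v with
        | nil => exact absurd hn (nf_ne_nil x)
        | cons h v => exact ⟨_, rfl, LinW.of_act (nf_irr x _ hn) hw hl⟩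
    | ih2 g a h1 h2 =>
      rintro ⟨w, hw, hl⟩
      have e : Qofw (of g * a) * x = gq g * (Qofw a * x) := mul_assoc (gq g) (Qofw a) x
      rw [e] at hw
      exact h2 x (h1 _ ⟨w, hw, hl⟩)

theorem gq_cons_src {t' : T} {A : N.T0} (h : A.1 = N.s t') (w : List (Gen N)) :
    gq (.ver A) * back (some (.pos t' :: w)) = back (some (.pos t' :: w)) := by
  apply gq_mul_back_eq
  rw [ver_eq_iff.2 (show A.1 = (srcT N t').1 from h)]
  exact gq_src (.pos t')

theorem LinW.isLin {w : List (Gen N)} (h : LinW N w) : IsLin (back (some w)) := by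
  induction h with
  | ver A =>
    refine ⟨gq (.ver A), ?_⟩
    rw [back_single]
    exact (gq_src (.ver A)).symm ▸ isVtx_ver A
  | pos t =>
    refine ⟨gq (.neg t), ?_⟩
    rw [back_single, gq_neg_pos]
    exact isVtx_ver _
  | cons t t' w h1 h2 ih =>
    obtain ⟨y, hy⟩ := ih
    refine ⟨y * gq (.neg t), ?_⟩
    have h3 := gq_cons_src (A := rngT N t) h1 w
    rwa [back_cons, mul_assoc, ← mul_assoc (gq (.neg t)), gq_neg_pos, h3]

/-- `IsLin` singles out the linear paths: each has the left inverse `α⁻¹`, and conversely being a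
linear path passes from `yx` to `x`. -/
theorem isLin_iff {x : QGamma N} : IsLin x ↔ ∃ w, nf x = some w ∧ LinW N w := by
  constructor
  · rintro ⟨y, hy⟩
    obtain ⟨A, hA⟩ := isVtx_iff.1 hy
    exact LinW.of_mul y x ⟨_, by rw [hA, nf_ver], .ver A⟩
  · rintro ⟨w, hw, hl⟩
    rw [← back_nf x, hw]
    exact hl.isLin

/-- The degree of a generator: `1` on `T`, `-1` on `T⁻¹`, `0` on `T⁰`. -/
def gdeg : Gen N → ℤ
  | .pos _ => 1
  | .neg _ => -1
  | .ver _ => 0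
  | .zero => 0

/-- The degree of a word. -/
def deg (w : List (Gen N)) : ℤ := (w.map gdeg).sum

theorem deg_cons (g : Gen N) (w : List (Gen N)) : deg (g :: w) = gdeg g + deg w := by
  simp [deg]

theorem deg_nil : deg ([] : List (Gen N)) = 0 := rfl

theorem deg_att {B : N.T0} {w w' : List (Gen N)} (h : att B w = some w') : deg w' = deg w := by
  cases w with
  | nil => cases h; simp [deg_cons, gdeg]
  | cons k w =>
    rw [att] at h
    split_ifs at h <;> cases h <;> simp [deg_cons, gdeg]

theorem deg_act {g : Gen N} {w w' : List (Gen N)} (h : act g w = some w') :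
    deg w' = gdeg g + deg w := by
  match g, w with
  | .ver B, w => rw [deg_att h]; simp [gdeg]
  | .pos t, [] => cases h; rfl
  | .pos t, a :: w =>
    rw [act] at h
    split_ifs at h with h1 h2 <;> cases h
    · subst h1; simp [deg_cons, gdeg]
    · simp [deg_cons]
  | .neg t, [] => cases h; rfl
  | .neg t, .pos t' :: w =>
    rw [act] at h
    split_ifs at h
    rw [deg_att h]; simp [deg_cons, gdeg]
  | .neg t, .neg t' :: w =>
    rw [act] at h
    split_ifs at h
    cases h; simp [deg_cons]
  | .neg t, [.ver A] =>
    rw [act] at h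
    split_ifs at h
    cases h; simp [deg_cons, gdeg]
  | .neg _, .ver _ :: _ :: _ => cases h
  | .neg _, .zero :: _ => cases h
  | .zero, _ => cases h

/-- Acting by a fixed word shifts the degree by a constant, unless the result is `0`. -/
theorem deg_wact (a : FreeSemigroup (Gen N)) :
    ∃ d : ℤ, ∀ w w', wact a (some w) = some w' → deg w' = d + deg w := by
  induction a using FreeSemigroup.recOnMul with
  | ih1 g => exact ⟨gdeg g, fun w w' h => deg_act h⟩
  | ih2 g a h1 h2 =>
    obtain ⟨d1, h1⟩ := h1
    obtain ⟨d2, h2⟩ := h2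
    refine ⟨d1 + d2, fun w w' h => ?_⟩
    rw [wact_mul] at h
    cases hn : wact a (some w) with
    | none => rw [hn] at h; cases h
    | some v =>
      rw [hn] at h
      rw [h1 v w' h, h2 w v hn, add_assoc]

/-- The degree is additive on products that are not `0`. -/
theorem deg_mul {u v : QGamma N} {wu wv w : List (Gen N)} (hu : nf u = some wu)
    (hv : nf v = some wv) (h : nf (u * v) = some w) : deg w = deg wu + deg wv := by
  induction u using Con.induction_on with
  | H a =>
    change nf (Qofw a * v) = _ at h
    rw [nf_mul, hv] at h
    obtain ⟨d, hd⟩ := deg_wact a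
    have h1 := hd _ _ h
    have h2 := hd _ _ hu
    rw [deg_nil] at h2
    omega

theorem LinW.deg_cases {w : List (Gen N)} (h : LinW N w) : (∃ A, w = [.ver A]) ∨ 1 ≤ deg w := by
  induction h with
  | ver A => exact Or.inl ⟨A, rfl⟩
  | pos t => exact Or.inr (by simp [deg_cons, gdeg, deg_nil])
  | cons t t' w h1 h2 ih =>
    right
    rcases ih with ⟨A, hA⟩ | ih
    · cases hA
    · rw [deg_cons]; simp only [gdeg]; omega

theorem not_isVtx_pos (t : T) : ¬ IsVtx (gq (.pos t) : QGamma N) := by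
  intro h
  obtain ⟨A, hA⟩ := isVtx_iff.1 h
  have := congrArg nf hA
  rw [nf_pos, nf_ver] at this
  simp at this

/-- `IsEdge` singles out `T`: linear paths of degree at least `2` factor as `t` times a shorter
linear path, whereas the degree shows that `t` has no proper factorization into linear paths. -/
theorem isEdge_iff {x : QGamma N} : IsEdge x ↔ ∃ t, x = gq (.pos t) := by
  constructor
  · rintro ⟨h1, h2, h3⟩
    obtain ⟨w, hw, hl⟩ := isLin_iff.1 h1
    have hx : x = back (some w) := by rw [← hw, back_nf]
    cases hl with
    | ver A => exact absurd (hx ▸ isVtx_ver A) h2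
    | pos t => exact ⟨t, hx⟩
    | cons t t' w h4 h5 =>
      exfalso
      rw [back_cons] at hx
      rcases h3 _ _ (LinW.pos t).isLin h5.isLin hx with h | h
      · exact not_isVtx_pos t h
      · obtain ⟨A, hA⟩ := isVtx_iff.1 h
        have h6 := congrArg nf hx
        rw [hw, hA, nf_gq_mul, nf_ver] at h6
        change _ = act (.pos t) [.ver A] at h6
        rw [act] at h6
        split_ifs at h6 <;> simp at h6
  · rintro ⟨t, rfl⟩
    refine ⟨(LinW.pos t).isLin, not_isVtx_pos t, fun u v hu hv huv => ?_⟩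
    obtain ⟨wu, hwu, hlu⟩ := isLin_iff.1 hu
    obtain ⟨wv, hwv, hlv⟩ := isLin_iff.1 hv
    have hd := deg_mul hwu hwv (huv ▸ nf_pos t)
    rcases hlu.deg_cases with ⟨A, rfl⟩ | h1
    · exact Or.inl (isVtx_iff.2 ⟨A, nf_injective (hwu.trans (nf_ver A).symm)⟩)
    rcases hlv.deg_cases with ⟨A, rfl⟩ | h2
    · exact Or.inr (isVtx_iff.2 ⟨A, nf_injective (hwv.trans (nf_ver A).symm)⟩)
    simp only [deg_cons, gdeg, deg_nil] at hd
    omega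

/-- Singletons are the elements of `T⁰` all of whose neighbours for the relation `AB ≠ 0` are
neighbours of each other. -/
theorem single_iff (A : N.T0) :
    (∃ v, A = single N v) ↔ ∀ B C : N.T0, (gq (.ver A) * gq (.ver B) : QGamma N) ≠ gq .zero →
      (gq (.ver A) * gq (.ver C) : QGamma N) ≠ gq .zero →
      (gq (.ver B) * gq (.ver C) : QGamma N) ≠ gq .zero := by
  simp only [ver_mul_ver_ne]
  constructor
  · rintro ⟨v, rfl⟩ B C ⟨x, hx, hB⟩ ⟨y, hy, hC⟩
    obtain rfl : x = v := hx
    obtain rfl : y = x := hy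
    exact ⟨y, hB, hC⟩
  · intro h
    obtain ⟨v, hv⟩ := T0_nonempty A
    refine ⟨v, Subtype.ext (Set.eq_singleton_iff_unique_mem.2 ⟨hv, fun w hw => ?_⟩)⟩
    obtain ⟨x, hx, hx'⟩ := h (single N w) (single N v) ⟨w, hw, rfl⟩ ⟨v, hv, rfl⟩
    exact (show x = w from hx).symm.trans hx'

end Recover

/-! ### Isomorphisms -/

section Iso

variable {V₁ T₁ V₂ T₂ : Type} {N : Network V₁ T₁} {M : Network V₂ T₂}

theorem map_ver (e : QGamma N ≃* QGamma M) (A : N.T0) : ∃ B, e (gq (.ver A)) = gq (.ver B) :=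
  isVtx_iff.1 ((isVtx_ver A).map e)

theorem map_pos (e : QGamma N ≃* QGamma M) (t : T₁) : ∃ t', e (gq (.pos t)) = gq (.pos t') :=
  isEdge_iff.1 ((isEdge_iff.2 ⟨t, rfl⟩).map e)

theorem map_mul_ne_zero (e : QGamma N ≃* QGamma M) {x y : QGamma N} :
    e x * e y ≠ gq .zero ↔ x * y ≠ gq .zero := by
  rw [← map_mul, ← map_zero' e, e.injective.ne_iff]

theorem map_single (e : QGamma N ≃* QGamma M) (v : V₁) :
    ∃ v', e (gq (.ver (single N v))) = gq (.ver (single M v')) := by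
  obtain ⟨A, hA⟩ := map_ver e (single N v)
  have key : ∃ v', A = single M v' := by
    rw [single_iff]
    intro B C hB hC
    obtain ⟨B', hB'⟩ := map_ver e.symm B
    obtain ⟨C', hC'⟩ := map_ver e.symm C
    rw [MulEquiv.symm_apply_eq] at hB' hC'
    rw [← hA, hB', map_mul_ne_zero] at hB
    rw [← hA, hC', map_mul_ne_zero] at hC
    rw [hB', hC', map_mul_ne_zero]
    exact (single_iff _).1 ⟨v, rfl⟩ B' C' hB hC
  obtain ⟨v', rfl⟩ := key
  exact ⟨v', hA⟩

theorem single_inj {v w : V₁} (h : (gq (.ver (single N v)) : QGamma N) = gq (.ver (single N w))) :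
    v = w := Set.singleton_injective (ver_inj h)

/-- Membership of a vertex in an element of `T⁰`, expressed by multiplication. -/
theorem mem_iff {v : V₁} {A : N.T0} :
    v ∈ A.1 ↔ (gq (.ver (single N v)) * gq (.ver A) : QGamma N) ≠ gq .zero := by
  rw [ver_mul_ver_ne]
  exact Set.singleton_inter_nonempty.symm

/-- An isomorphism of semigroups maps singletons to singletons and `T` to `T`, which gives the
bijections; sources and ranges are recovered from `At = t` and `tA = t`. -/
theorem networkIso_of_mulEquiv (e : QGamma N ≃* QGamma M) : NetworkIso N M := by
  choose f hf using map_single e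
  choose f' hf' using map_single e.symm
  choose g hg using map_pos e
  choose g' hg' using map_pos e.symm
  let φV : V₁ ≃ V₂ :=
    { toFun := f
      invFun := f'
      left_inv := fun v => single_inj (by rw [← hf', ← hf, e.symm_apply_apply])
      right_inv := fun v => single_inj (by rw [← hf, ← hf', e.apply_symm_apply]) }
  let φT : T₁ ≃ T₂ :=
    { toFun := g
      invFun := g'
      left_inv := fun v => pos_inj (N := N) (by rw [← hg', ← hg, e.symm_apply_apply])
      right_inv := fun v => pos_inj (N := M) (by rw [← hg, ← hg', e.apply_symm_apply]) }
  have himg : ∀ (A : N.T0) (B : M.T0), e (gq (.ver A)) = gq (.ver B) → φV '' A.1 = B.1 := by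
    intro A B hAB
    ext w
    obtain ⟨v, rfl⟩ := φV.surjective w
    rw [φV.injective.mem_set_image, mem_iff, mem_iff, ← hAB]
    change _ ↔ gq (.ver (single M (f v))) * _ ≠ _
    rw [← hf, map_mul_ne_zero]
  refine ⟨φV, φT, fun t => ⟨?_, ?_⟩⟩
  · obtain ⟨B, hB⟩ := map_ver e (srcT N t)
    have h := congrArg e (gq_src (N := N) (.pos t))
    rw [map_mul, hg] at h
    change e (gq (.ver (srcT N t))) * _ = _ at h
    rw [hB] at h
    exact (himg _ _ hB).trans (ver_mul_pos h)
  · obtain ⟨B, hB⟩ := map_ver e (rngT N t)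
    have h := congrArg e (gq_rng (N := N) (.pos t))
    rw [map_mul, hg] at h
    change _ * e (gq (.ver (rngT N t))) = _ at h
    rw [hB] at h
    exact (himg _ _ hB).trans (pos_mul_ver h)

/-- A network isomorphism given by `φV` and `φT`. -/
def IsIsoPair (N : Network V₁ T₁) (M : Network V₂ T₂) (φV : V₁ ≃ V₂) (φT : T₁ ≃ T₂) : Prop :=
  ∀ t : T₁, φV '' N.s t = M.s (φT t) ∧ φV '' N.r t = M.r (φT t)

theorem IsIsoPair.symm {φV : V₁ ≃ V₂} {φT : T₁ ≃ T₂} (h : IsIsoPair N M φV φT) :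
    IsIsoPair M N φV.symm φT.symm := by
  intro t
  obtain ⟨t, rfl⟩ := φT.surjective t
  rw [← (h t).1, ← (h t).2, φT.symm_apply_apply]
  exact ⟨φV.symm_image_image _, φV.symm_image_image _⟩

theorem IsIsoPair.inT0 {φV : V₁ ≃ V₂} {φT : T₁ ≃ T₂} (h : IsIsoPair N M φV φT) {A : Set V₁}
    (hA : N.InT0 A) : M.InT0 (φV '' A) := by
  obtain ⟨t, rfl⟩ | ⟨t, rfl⟩ | ⟨v, rfl⟩ := hA
  · exact Or.inl ⟨φT t, (h t).1⟩
  · exact Or.inr (Or.inl ⟨φT t, (h t).2⟩)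
  · exact Or.inr (Or.inr ⟨φV v, Set.image_singleton⟩)

/-- The map of generators induced by a network isomorphism. -/
def genMap {φV : V₁ ≃ V₂} {φT : T₁ ≃ T₂} (h : IsIsoPair N M φV φT) : Gen N → Gen M
  | .pos t => .pos (φT t)
  | .neg t => .neg (φT t)
  | .ver A => .ver ⟨φV '' A.1, h.inT0 A.2⟩
  | .zero => .zero

variable {φV : V₁ ≃ V₂} {φT : T₁ ≃ T₂} (h : IsIsoPair N M φV φT)

theorem genMap_srcSet (g : Gen N) : (genMap h g).srcSet = φV '' g.srcSet := by
  cases g with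
  | pos t => exact (h t).1.symm
  | neg t => exact (h t).2.symm
  | ver A => rfl
  | zero => exact (Set.image_empty _).symm

theorem genMap_rngSet (g : Gen N) : (genMap h g).rngSet = φV '' g.rngSet := by
  cases g with
  | pos t => exact (h t).2.symm
  | neg t => exact (h t).1.symm
  | ver A => rfl
  | zero => exact (Set.image_empty _).symm

theorem genMap_srcGen (g : Gen N) : genMap h g.srcGen = (genMap h g).srcGen := by
  cases g with
  | pos t => exact ver_eq_iff.2 (h t).1
  | neg t => exact ver_eq_iff.2 (h t).2
  | ver A => rfl
  | zero => rfl

theorem genMap_rngGen (g : Gen N) : genMap h g.rngGen = (genMap h g).rngGen := by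
  cases g with
  | pos t => exact ver_eq_iff.2 (h t).2
  | neg t => exact ver_eq_iff.2 (h t).1
  | ver A => rfl
  | zero => rfl

theorem genMap_symm (g : Gen N) : genMap h.symm (genMap h g) = g := by
  cases g with
  | pos t => simp [genMap]
  | neg t => simp [genMap]
  | ver A => exact ver_eq_iff.2 (φV.symm_image_image _)
  | zero => rfl

/-- The map of words with values in `Q_Δ` induced by a network isomorphism. -/
def wordMap : FreeSemigroup (Gen N) →ₙ* QGamma M :=
  FreeSemigroup.lift fun g => gq (genMap h g)

theorem wordMap_of (g : Gen N) : wordMap h (of g) = gq (genMap h g) := rfl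

theorem wordMap_rel {a b : FreeSemigroup (Gen N)} (hab : QCon N a b) :
    wordMap h a = wordMap h b := by
  induction hab with
  | refl => rfl
  | symm _ ih => exact ih.symm
  | trans _ _ ih1 ih2 => exact ih1.trans ih2
  | mul _ _ ih1 ih2 => rw [map_mul, map_mul, ih1, ih2]
  | of x y hxy =>
    cases hxy with
    | nr1l g hg => simp only [map_mul, wordMap_of, genMap_srcGen, gq_src]
    | nr1r g hg => simp only [map_mul, wordMap_of, genMap_rngGen, gq_rng]
    | nr2 g₁ g₂ h₁ h₂ hd =>
      rw [map_mul]
      simp only [wordMap_of]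
      refine gq_disjoint ?_
      rw [genMap_srcSet, genMap_rngSet, ← Set.image_inter φV.injective, hd, Set.image_empty]
    | nr3 t₁ t₂ ht =>
      rw [map_mul]
      exact rel_eq (.nr3 _ _ (φT.injective.ne ht))
    | nr4 t =>
      rw [map_mul]
      refine (gq_neg_pos (φT t)).trans (congrArg gq (ver_eq_iff.2 (h t).2.symm))
    | nr5 t A hA =>
      rw [map_mul]
      refine rel_eq (.nr5 _ _ ?_)
      rw [← (h t).1]
      exact φV.injective.image_injective.ne hA
    | nr6l x => rw [map_mul]; exact gq_zero_mul _
    | nr6r x => rw [map_mul]; exact mul_gq_zero _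

/-- The map `Q_Γ → Q_Δ` induced by a network isomorphism. -/
def qMap (x : QGamma N) : QGamma M := Con.liftOn x (wordMap h) fun _ _ => wordMap_rel h

theorem qMap_mul (x y : QGamma N) : qMap h (x * y) = qMap h x * qMap h y := by
  induction x using Con.induction_on with
  | H a =>
    induction y using Con.induction_on with
    | H b => exact map_mul (wordMap h) a b

theorem qMap_symm (x : QGamma N) : qMap h.symm (qMap h x) = x := by
  induction x using Con.induction_on with
  | H a =>
    change qMap h.symm (qMap h (Qofw a)) = Qofw a
    induction a using FreeSemigroup.recOnMul with
    | ih1 g => exact congrArg gq (genMap_symm h g)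
    | ih2 g a h1 h2 =>
      have e : Qofw (of g * a) = Qofw (of g) * Qofw a := rfl
      rw [e, qMap_mul, qMap_mul, h1, h2]

/-- The isomorphism `Q_Γ ≃ Q_Δ` induced by a network isomorphism. -/
def qEquiv : QGamma N ≃* QGamma M where
  toFun := qMap h
  invFun := qMap h.symm
  left_inv := qMap_symm h
  right_inv := qMap_symm h.symm
  map_mul' := qMap_mul h

end Iso

/-- two networks `Γ` and `Δ` are isomorphic if and only if the semigroups
`Q_Γ` and `Q_Δ` are isomorphic. -/
theorem network_iso_iff_QGamma_iso {V₁ T₁ V₂ T₂ : Type}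
    (N : Network V₁ T₁) (M : Network V₂ T₂) :
    NetworkIso N M ↔ Nonempty (QGamma N ≃* QGamma M) := by
  constructor
  · rintro ⟨φV, φT, h⟩
    exact ⟨qEquiv (φV := φV) (φT := φT) h⟩
  · rintro ⟨e⟩
    exact networkIso_of_mulEquiv e

end NetworkSemigroup
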